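/- arXiv:1608.02393 — 3 statements merged into one kernel-verified Lean document; each statement's English description precedes it below -/
import Mathlib

section
/- Let X and Y be metric spaces satisfying assumptions (A), let Ω ⊊ X be a bounded domain satisfying the bounded turning condition, let Ω' ⊊ Y be a bounded domain, and let f ∈ F(Ω, Ω'). Suppose f has a continuous extension F : closure(Ω) → Ω'' (i.e., F is continuous and F restricted to Ω equals f), where Ω'' := Ω' ∪ ⋃_{x ∈ ∂Ω} C(f,x). Then every prime end of Ω' whose impression is contained in ⋃_{x ∈ ∂Ω} C(f,x) is a singleton prime end. -/
open Set Metric Filter Bornology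
open scoped ENNReal Topology

noncomputable section

/-- A metric space is doubling if there is `N` such that every ball of radius `r`
can be covered by at most `N` balls of radius `r/2`. -/
def DoublingSpace (X : Type*) [MetricSpace X] : Prop :=
  ∃ N : ℕ, ∀ (x : X) (r : ℝ), ∃ t : Finset X,
    t.card ≤ N ∧ Metric.ball x r ⊆ ⋃ y ∈ t, Metric.ball y (r / 2)

/-- A metric space is quasiconvex if there is `C ≥ 1` such that any two points are
joined by a rectifiable curve of length at most `C · d(x,y)`. -/
def QuasiconvexSpace (X : Type*) [MetricSpace X] : Prop :=
  ∃ C : ℝ, 1 ≤ C ∧ ∀ x y : X, ∃ γ : ℝ → X,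
    ContinuousOn γ (Set.Icc 0 1) ∧ γ 0 = x ∧ γ 1 = y ∧
    eVariationOn γ (Set.Icc 0 1) ≤ ENNReal.ofReal (C * dist x y)

/-- Assumptions (A): complete, doubling and quasiconvex. -/
def AssumptionsA (X : Type*) [MetricSpace X] : Prop :=
  CompleteSpace X ∧ DoublingSpace X ∧ QuasiconvexSpace X

/-- A domain: a nonempty open connected subset. -/
def IsDomainIn {X : Type*} [MetricSpace X] (Ω : Set X) : Prop :=
  IsOpen Ω ∧ IsConnected Ω

/-- The inner diameter distance `dist_{M'}` between `E, F ⊆ Ω`: the infimum of diameters of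
rectifiable curves in `Ω` joining `E` and `F` (the infimum of the empty set being `∞`). -/
def innerDiamDist {X : Type*} [MetricSpace X] (Ω E F : Set X) : ℝ≥0∞ :=
  ⨅ (γ : ℝ → X) (_ : ContinuousOn γ (Set.Icc 0 1) ∧ γ '' Set.Icc 0 1 ⊆ Ω ∧
      eVariationOn γ (Set.Icc 0 1) < ⊤ ∧ γ 0 ∈ E ∧ γ 1 ∈ F),
    EMetric.diam (γ '' Set.Icc 0 1)

/-- The Mazurkiewicz distance `dist_M` between `A, B ⊆ Ω`: the infimum of diameters of
connected subsets of `Ω` meeting both `A` and `B`. -/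
def mazDist {X : Type*} [MetricSpace X] (Ω A B : Set X) : ℝ≥0∞ :=
  ⨅ (K : Set X) (_ : K ⊆ Ω ∧ IsConnected K ∧ (K ∩ A).Nonempty ∧ (K ∩ B).Nonempty),
    EMetric.diam K

/-- An acceptable set in a bounded domain `Ω`: a bounded connected proper subset of `Ω`
whose closure meets `∂Ω`. -/
def AcceptableIn {X : Type*} [MetricSpace X] (Ω E : Set X) : Prop :=
  Bornology.IsBounded E ∧ IsConnected E ∧ E ⊆ Ω ∧ E ≠ Ω ∧
    (closure E ∩ frontier Ω).Nonempty

/-- A chain in `Ω`. -/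
def IsChainIn {X : Type*} [MetricSpace X] (Ω : Set X) (E : ℕ → Set X) : Prop :=
  (∀ k, AcceptableIn Ω (E k)) ∧
  (∀ k, E (k + 1) ⊆ E k) ∧
  (∀ k, 0 < mazDist Ω (Ω ∩ frontier (E (k + 1))) (Ω ∩ frontier (E k))) ∧
  (⋂ k, closure (E k)) ⊆ frontier Ω

/-- The impression of a chain. -/
def impression {X : Type*} [MetricSpace X] (E : ℕ → Set X) : Set X :=
  ⋂ k, closure (E k)

/-- A chain `E` divides a chain `F` if every member of `F` contains some member of `E`. -/
def ChainDivides {X : Type*} (E F : ℕ → Set X) : Prop :=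
  ∀ k, ∃ l, E l ⊆ F k

/-- Two chains are equivalent if they divide each other. -/
def ChainEquiv {X : Type*} (E F : ℕ → Set X) : Prop :=
  ChainDivides E F ∧ ChainDivides F E

/-- A chain represents a prime end if every chain dividing it is equivalent to it. -/
def IsPrimeChain {X : Type*} [MetricSpace X] (Ω : Set X) (E : ℕ → Set X) : Prop :=
  IsChainIn Ω E ∧ ∀ F : ℕ → Set X, IsChainIn Ω F → ChainDivides F E → ChainDivides E F

/-- A chain represents a singleton prime end if moreover its impression is a single point. -/
def IsSingletonPrimeChain {X : Type*} [MetricSpace X] (Ω : Set X) (E : ℕ → Set X) : Prop :=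
  IsPrimeChain Ω E ∧ ∃ x : X, impression E = {x}

/-- The bounded turning condition (linear connectedness): any two distinct points of `Ω` lie in a
continuum contained in `Ω` of diameter at most `L` times their distance. -/
def BoundedTurning {X : Type*} [MetricSpace X] (Ω : Set X) : Prop :=
  ∃ L : ℝ, 1 ≤ L ∧ ∀ x ∈ Ω, ∀ y ∈ Ω, x ≠ y → ∃ K : Set X,
    K ⊆ Ω ∧ IsCompact K ∧ IsConnected K ∧ K.Nontrivial ∧ x ∈ K ∧ y ∈ K ∧
    Metric.diam K ≤ L * dist x y

/-- `Ω` is finitely connected at a boundary point `x`. -/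
def FinitelyConnectedAt {X : Type*} [MetricSpace X] (Ω : Set X) (x : X) : Prop :=
  ∀ r : ℝ, 0 < r → ∃ U : Set X, IsOpen U ∧ Bornology.IsBounded U ∧ x ∈ U ∧
    U ⊆ Metric.ball x r ∧
    {C : Set X | ∃ y ∈ U ∩ Ω, C = connectedComponentIn (U ∩ Ω) y}.Finite

/-- `Ω` is finitely connected at the boundary. -/
def FinitelyConnectedAtBoundary {X : Type*} [MetricSpace X] (Ω : Set X) : Prop :=
  ∀ x ∈ frontier Ω, FinitelyConnectedAt Ω x

/-- `Ω` is locally connected at a boundary point `x`. -/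
def LocallyConnectedAt {X : Type*} [MetricSpace X] (Ω : Set X) (x : X) : Prop :=
  ∀ r : ℝ, 0 < r → ∃ U : Set X, IsOpen U ∧ Bornology.IsBounded U ∧ x ∈ U ∧
    U ⊆ Metric.ball x r ∧ IsConnected (U ∩ Ω)

/-- `Ω` is locally connected at the boundary. -/
def LocallyConnectedAtBoundary {X : Type*} [MetricSpace X] (Ω : Set X) : Prop :=
  ∀ x ∈ frontier Ω, LocallyConnectedAt Ω x

/-- `f` is a homeomorphism of `Ω` onto `Ω'` with inverse `g`. -/
def IsHomeoBetween {X Y : Type*} [MetricSpace X] [MetricSpace Y] (f : X → Y) (g : Y → X)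
    (Ω : Set X) (Ω' : Set Y) : Prop :=
  ContinuousOn f Ω ∧ ContinuousOn g Ω' ∧ Set.MapsTo f Ω Ω' ∧ Set.MapsTo g Ω' Ω ∧
  (∀ x ∈ Ω, g (f x) = x) ∧ (∀ y ∈ Ω', f (g y) = y)

/-- The class `F(Ω, Ω')`: homeomorphisms such that for all connected `E, F ⊊ Ω`,
`dist_{M'}(E,F) = 0` iff `dist_{M'}(f(E), f(F)) = 0`. -/
def ClassF {X Y : Type*} [MetricSpace X] [MetricSpace Y] (Ω : Set X) (Ω' : Set Y)
    (f : X → Y) (g : Y → X) : Prop :=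
  IsHomeoBetween f g Ω Ω' ∧
  ∀ E F : Set X, E ⊆ Ω → E ≠ Ω → IsConnected E → F ⊆ Ω → F ≠ Ω → IsConnected F →
    (innerDiamDist Ω E F = 0 ↔ innerDiamDist Ω' (f '' E) (f '' F) = 0)

/-- The cluster set `C(f, x)` of `f : Ω → Y` at `x`. -/
def clusterSetOn {X Y : Type*} [MetricSpace X] [MetricSpace Y] (f : X → Y) (Ω : Set X)
    (x : X) : Set Y :=
  ⋂ U ∈ 𝓝 x, closure (f '' (U ∩ Ω))

/-!
Pull a prime chain `E` of `Ω'` back to `Ω` by `f⁻¹`. Compactness of the closure of `Ω` gives a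
point `x` in the closure of every `f⁻¹(E k)`, and bounded turning gives connected neighbourhoods
`V n` of `x` relative to `Ω` that shrink to `x`. Their images under `f` shrink to the limit `y` of
`f` at `x`.

The images `f(V n)` form a chain, because sets at positive distance in `Ω` have images at positive
Mazurkiewicz distance: cover `Ω` by finitely many small connected sets; members of the cover that
are far apart are not brought into contact by `f`, and there are only finitely many pairs of them.

Every `f(V n)` meets every `E k` and has small diameter for large `n`, so it cannot cross both
`∂(E (k + 1))` and `∂(E k)`. Hence the chain `f(V n)` divides `E`. As `E` is prime, the two chains
are equivalent, and the impression of `E` is that of `f(V n)`, namely `{y}`.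
-/

/-! ### Connected sets and small diameters -/

theorem inter_frontier_nonempty_of_isPreconnected {X : Type*} [TopologicalSpace X] {K S : Set X}
    (hK : IsPreconnected K) (hKS : (K ∩ S).Nonempty) (hnot : ¬ K ⊆ S) :
    (K ∩ frontier S).Nonempty := by
  by_contra hempty
  have hint : closure S ∩ K ⊆ interior S := by
    rintro z ⟨hzS, hzK⟩
    by_contra hz
    exact hempty ⟨z, hzK, hzS, hz⟩
  refine hnot ((hK.subset_of_closure_inter_subset isOpen_interior ?_ ?_).trans interior_subset)
  · exact hKS.mono fun z hz => ⟨hz.1, hint ⟨subset_closure hz.2, hz.1⟩⟩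
  · exact (inter_subset_inter_left K (closure_mono interior_subset)).trans hint

theorem tendsto_ediam_smallSets_nhds {X : Type*} [PseudoEMetricSpace X] (x : X) :
    Tendsto ediam (𝓝 x).smallSets (𝓝 0) := by
  refine ENNReal.tendsto_nhds_zero.2 fun ε hε => eventually_smallSets.2
    ⟨eball x (ε / 2), eball_mem_nhds x (ENNReal.half_pos hε.ne'), fun s hs => ?_⟩
  calc ediam s ≤ ediam (eball x (ε / 2)) := ediam_mono hs
    _ ≤ 2 * (ε / 2) := ediam_eball_le
    _ = ε := ENNReal.mul_div_cancel two_ne_zero ENNReal.ofNat_ne_top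

theorem exists_pos_forall_le_of_finite {ι : Type*} {S : Set ι} (hS : S.Finite) (φ : ι → ℝ≥0∞) :
    ∃ η > 0, ∀ i ∈ S, 0 < φ i → η ≤ φ i := by
  have hev : ∀ᶠ η in 𝓝[>] (0 : ℝ≥0∞), ∀ i ∈ S, 0 < φ i → η ≤ φ i :=
    (eventually_all_finite hS).2 fun i _ => by
      by_cases hi : 0 < φ i
      · filter_upwards [Ioo_mem_nhdsGT hi] with η hη _ using hη.2.le
      · exact Eventually.of_forall fun _ h => absurd h hi
  exact (hev.and self_mem_nhdsWithin).exists.imp fun _ h => ⟨h.2, h.1⟩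

/-! ### Doubling spaces -/

namespace DoublingSpace

variable {X : Type*} [MetricSpace X]

theorem exists_finset_ball_subset (hX : DoublingSpace X) (n : ℕ) (x : X) (r : ℝ) :
    ∃ t : Finset X, ball x r ⊆ ⋃ y ∈ t, ball y (r / 2 ^ n) := by
  classical
  obtain ⟨N, hN⟩ := hX
  induction n with
  | zero => exact ⟨{x}, by simp⟩
  | succ n ih =>
    obtain ⟨t, ht⟩ := ih
    choose u _ hu using fun y => hN y (r / 2 ^ n)
    refine ⟨t.biUnion u, fun z hz => ?_⟩
    obtain ⟨y, hy, hzy⟩ := mem_iUnion₂.1 (ht hz)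
    obtain ⟨w, hw, hzw⟩ := mem_iUnion₂.1 (hu y hzy)
    refine mem_iUnion₂.2 ⟨w, Finset.mem_biUnion.2 ⟨y, hy, hw⟩, ?_⟩
    rwa [pow_succ, ← div_div]

theorem totallyBounded (hX : DoublingSpace X) {S : Set X} (hS : IsBounded S) :
    TotallyBounded S := by
  rcases S.eq_empty_or_nonempty with rfl | ⟨x, -⟩
  · exact totallyBounded_empty
  obtain ⟨R, hR⟩ := hS.subset_ball x
  refine Metric.totallyBounded_iff.2 fun ε hε => ?_
  have hlim : Tendsto (fun n : ℕ => R / 2 ^ n) atTop (𝓝 0) :=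
    tendsto_const_nhds.div_atTop (tendsto_pow_atTop_atTop_of_one_lt one_lt_two)
  obtain ⟨n, hn⟩ := (hlim.eventually (gt_mem_nhds hε)).exists
  obtain ⟨t, ht⟩ := hX.exists_finset_ball_subset n x R
  exact ⟨t, t.finite_toSet,
    hR.trans (ht.trans (iUnion₂_mono fun y _ => ball_subset_ball hn.le))⟩

theorem isCompact_closure [CompleteSpace X] (hX : DoublingSpace X) {S : Set X}
    (hS : IsBounded S) : IsCompact (closure S) :=
  (hX.totallyBounded hS).closure.isCompact_of_isClosed isClosed_closure

end DoublingSpace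

/-! ### Rectifiable curves and the two distances -/

/-- The points `p` and `q` are joined by a rectifiable curve inside `W`. Curves are Mathlib paths,
for which concatenation is available, rather than the maps `ℝ → X` of `innerDiamDist`. -/
def RectifiablyJoinedIn {X : Type*} [MetricSpace X] (W : Set X) (p q : X) : Prop :=
  ∃ γ : Path p q, range γ ⊆ W ∧ BoundedVariationOn γ univ

namespace RectifiablyJoinedIn

variable {X : Type*} [MetricSpace X] {W Ω A B : Set X} {p q r : X}

theorem symm (h : RectifiablyJoinedIn W p q) : RectifiablyJoinedIn W q p := by
  obtain ⟨γ, hγW, hγ⟩ := h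
  refine ⟨γ.symm, γ.symm_range ▸ hγW, ne_top_of_le_ne_top hγ ?_⟩
  exact eVariationOn.comp_le_of_antitoneOn γ unitInterval.symm
    (unitInterval.strictAnti_symm.antitone.antitoneOn _) (mapsTo_univ _ _)

theorem trans (hpq : RectifiablyJoinedIn W p q) (hqr : RectifiablyJoinedIn W q r) :
    RectifiablyJoinedIn W p r := by
  obtain ⟨α, hαW, hα⟩ := hpq
  obtain ⟨β, hβW, hβ⟩ := hqr
  refine ⟨α.trans β, Path.trans_range α β ▸ union_subset hαW hβW, ?_⟩
  let half : unitInterval := ⟨1 / 2, by norm_num, by norm_num⟩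
  let φ : unitInterval → unitInterval := fun t => projIcc 0 1 zero_le_one (2 * t)
  let ψ : unitInterval → unitInterval := fun t => projIcc 0 1 zero_le_one (2 * t - 1)
  have hφ : Monotone φ := fun s t hst => monotone_projIcc _ (by gcongr)
  have hψ : Monotone ψ := fun s t hst => monotone_projIcc _ (by gcongr)
  have hleft : EqOn (α.trans β) (α ∘ φ) (Iic half) := fun t ht => if_pos ht
  have hright : EqOn (α.trans β) (β ∘ ψ) (Ici half) := by
    intro t (ht : half ≤ t)
    rcases ht.eq_or_lt with rfl | ht
    · simp [Path.trans_apply, half, ψ]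
    · exact if_neg (not_le.2 ht)
  rw [BoundedVariationOn, ← Iic_union_Ici (a := half),
    eVariationOn.union _ isGreatest_Iic isLeast_Ici, eVariationOn.congr hleft,
    eVariationOn.congr hright]
  exact ENNReal.add_ne_top.2
    ⟨ne_top_of_le_ne_top hα
      (eVariationOn.comp_le_of_monotoneOn α φ (hφ.monotoneOn _) (mapsTo_univ _ _)),
    ne_top_of_le_ne_top hβ
      (eVariationOn.comp_le_of_monotoneOn β ψ (hψ.monotoneOn _) (mapsTo_univ _ _))⟩

theorem innerDiamDist_le (h : RectifiablyJoinedIn W p q) (hW : W ⊆ Ω) (hp : p ∈ A) (hq : q ∈ B) :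
    innerDiamDist Ω A B ≤ ediam W := by
  obtain ⟨γ, hγW, hγ⟩ := h
  have hrange : γ.extend '' Icc 0 1 = range γ := γ.image_extend_of_subset Subset.rfl
  have hvar : eVariationOn γ.extend (Icc 0 1) ≤ eVariationOn γ univ :=
    eVariationOn.comp_le_of_monotoneOn γ (projIcc 0 1 zero_le_one)
      ((monotone_projIcc _).monotoneOn _) (mapsTo_univ _ _)
  calc innerDiamDist Ω A B
      ≤ ediam (γ.extend '' Icc 0 1) := iInf₂_le _ ⟨γ.extend.continuous.continuousOn,
          hrange.trans_subset (hγW.trans hW), hvar.trans_lt hγ.lt_top,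
          by rwa [γ.extend_zero], by rwa [γ.extend_one]⟩
    _ ≤ ediam W := ediam_mono (hrange.trans_subset hγW)

end RectifiablyJoinedIn

section Distances

variable {X : Type*} [MetricSpace X] {Ω A B : Set X}

theorem mazDist_le_ediam {K : Set X} (hKΩ : K ⊆ Ω) (hK : IsConnected K) (hA : (K ∩ A).Nonempty)
    (hB : (K ∩ B).Nonempty) : mazDist Ω A B ≤ ediam K :=
  iInf₂_le K ⟨hKΩ, hK, hA, hB⟩

theorem ofReal_le_innerDiamDist {δ : ℝ} (hAB : ∀ a ∈ A, ∀ b ∈ B, δ ≤ dist a b) :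
    ENNReal.ofReal δ ≤ innerDiamDist Ω A B := by
  refine le_iInf₂ fun γ ⟨_, _, _, h₀, h₁⟩ => ?_
  calc ENNReal.ofReal δ
      ≤ edist (γ 0) (γ 1) := edist_dist (γ 0) (γ 1) ▸ ENNReal.ofReal_le_ofReal (hAB _ h₀ _ h₁)
    _ ≤ ediam (γ '' Icc 0 1) := edist_le_ediam_of_mem
      (mem_image_of_mem γ (left_mem_Icc.2 zero_le_one))
      (mem_image_of_mem γ (right_mem_Icc.2 zero_le_one))

end Distances

namespace QuasiconvexSpace

variable {X : Type*} [MetricSpace X]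

theorem eventually_rectifiablyJoinedIn (hX : QuasiconvexSpace X) {W : Set X} {x : X}
    (hW : W ∈ 𝓝 x) : ∀ᶠ y in 𝓝 x, RectifiablyJoinedIn W x y := by
  obtain ⟨C, hC, hcurve⟩ := hX
  obtain ⟨ρ, hρ, hball⟩ := Metric.mem_nhds_iff.1 hW
  filter_upwards [ball_mem_nhds x (show 0 < ρ / C by positivity)] with y hy
  have hlen : C * dist x y < ρ := by
    rwa [mem_ball, dist_comm, lt_div_iff₀' (by positivity)] at hy
  obtain ⟨γ, hγ, rfl, rfl, hvar⟩ := hcurve x y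
  have hγW : ∀ t ∈ Icc (0 : ℝ) 1, γ t ∈ W := fun t ht => hball <| by
    rw [← eball_ofReal, mem_eball]
    calc edist (γ t) (γ 0) ≤ eVariationOn γ (Icc 0 1) :=
          eVariationOn.edist_le γ ht (left_mem_Icc.2 zero_le_one)
      _ ≤ ENNReal.ofReal (C * dist (γ 0) (γ 1)) := hvar
      _ < ENNReal.ofReal ρ := (ENNReal.ofReal_lt_ofReal_iff hρ).2 hlen
  refine ⟨⟨⟨(Icc 0 1).domRestrict γ, hγ.domRestrict⟩, rfl, rfl⟩,
    range_subset_iff.2 fun t => hγW t t.2,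
    ne_top_of_le_ne_top (hvar.trans_lt ENNReal.ofReal_lt_top).ne ?_⟩
  exact eVariationOn.comp_le_of_monotoneOn γ Subtype.val
    ((Subtype.mono_coe _).monotoneOn _) fun t _ => t.2

theorem rectifiablyJoinedIn (hX : QuasiconvexSpace X) {W K : Set X} (hW : IsOpen W)
    (hK : IsPreconnected K) (hKW : K ⊆ W) {p q : X} (hp : p ∈ K) (hq : q ∈ K) :
    RectifiablyJoinedIn W p q :=
  hK.induction₂ (RectifiablyJoinedIn W)
    (fun _ hx => nhdsWithin_le_nhds (hX.eventually_rectifiablyJoinedIn (hW.mem_nhds (hKW hx))))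
    (fun _ _ _ _ _ _ => RectifiablyJoinedIn.trans) (fun _ _ _ _ => RectifiablyJoinedIn.symm) hp hq

theorem innerDiamDist_le_mazDist (hX : QuasiconvexSpace X) {Ω : Set X} (hΩ : IsOpen Ω)
    (A B : Set X) : innerDiamDist Ω A B ≤ mazDist Ω A B := by
  refine le_iInf₂ fun K ⟨hKΩ, hK, ⟨p, hpK, hpA⟩, ⟨q, hqK, hqB⟩⟩ => ?_
  refine ENNReal.le_of_forall_pos_le_add fun ε hε _ => ?_
  have hε2 : 0 < ε / 2 := half_pos hε
  have hjoin : RectifiablyJoinedIn (thickening (ε / 2 : NNReal) K ∩ Ω) p q :=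
    hX.rectifiablyJoinedIn (isOpen_thickening.inter hΩ) hK.isPreconnected
      (subset_inter (self_subset_thickening hε2 K) hKΩ) hpK hqK
  calc innerDiamDist Ω A B
      ≤ ediam (thickening (ε / 2 : NNReal) K ∩ Ω) :=
        hjoin.innerDiamDist_le inter_subset_right hpA hqB
    _ ≤ ediam (thickening (ε / 2 : NNReal) K) := ediam_mono inter_subset_left
    _ ≤ ediam K + 2 * (ε / 2 : NNReal) := ediam_thickening_le _
    _ = ediam K + ε := by rw [← ENNReal.coe_ofNat, ← ENNReal.coe_mul, mul_div_cancel₀ ε two_ne_zero]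

end QuasiconvexSpace

/-! ### Small connected sets in domains of bounded turning -/

/-- A decreasing sequence of connected subsets of `Ω` shrinking to the point `x` (usually on the
boundary), each term being a neighbourhood of `x` relative to `Ω`. The last field keeps the
relative boundaries of consecutive terms at positive distance, so that images of such sequences
can be chains. -/
structure IsConnectedNhdSeq {X : Type*} [MetricSpace X] (Ω : Set X) (x : X) (V : ℕ → Set X) :
    Prop where
  hasAntitoneBasis : (𝓝[Ω] x).HasAntitoneBasis V
  isConnected (k : ℕ) : IsConnected (V k)
  subset (k : ℕ) : V k ⊆ Ω
  exists_thickening_subset (k : ℕ) : ∃ δ > 0, thickening δ (V (k + 1)) ∩ Ω ⊆ V k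

namespace BoundedTurning

variable {X : Type*} [MetricSpace X] {Ω : Set X}

theorem exists_isConnected_between (hΩ : BoundedTurning Ω) :
    ∃ M : ℝ, 1 ≤ M ∧ ∀ x ∈ closure Ω, ∀ s > 0, ∃ V : Set X,
      IsConnected V ∧ ball x s ∩ Ω ⊆ V ∧ V ⊆ ball x (M * s) ∩ Ω := by
  obtain ⟨L, hL, hturn⟩ := hΩ
  refine ⟨2 * L + 1, by linarith, fun x hx s hs => ?_⟩
  have hsM : s ≤ (2 * L + 1) * s := by nlinarith
  obtain ⟨p, hpΩ, hpx⟩ := Metric.mem_closure_iff.1 hx s hs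
  rw [dist_comm] at hpx
  have hp : p ∈ ball x ((2 * L + 1) * s) ∩ Ω := ⟨hpx.trans_le hsM, hpΩ⟩
  refine ⟨connectedComponentIn _ p, isConnected_connectedComponentIn_iff.2 hp, ?_,
    connectedComponentIn_subset _ _⟩
  rintro y ⟨hyx, hyΩ⟩
  by_cases hpy : p = y
  · exact hpy ▸ mem_connectedComponentIn hp
  obtain ⟨K, hKΩ, hKcomp, hK, -, hpK, hyK, hdiam⟩ := hturn p hpΩ y hyΩ hpy
  have hpy2 : dist p y ≤ 2 * s := by
    linarith [dist_triangle_right p y x, mem_ball.1 hyx]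
  refine hK.isPreconnected.subset_connectedComponentIn hpK
    (subset_inter (fun z hz => mem_ball.2 ?_) hKΩ) hyK
  calc dist z x ≤ dist z p + dist p x := dist_triangle z p x
    _ < L * (2 * s) + s := by
      refine add_lt_add_of_le_of_lt ?_ hpx
      exact (dist_le_diam_of_mem hKcomp.isBounded hz hpK).trans (hdiam.trans (by gcongr))
    _ = (2 * L + 1) * s := by ring

theorem exists_finite_isConnected_cover (hΩ : BoundedTurning Ω) (htb : TotallyBounded Ω) {ε : ℝ}
    (hε : 0 < ε) : ∃ 𝒱 : Set (Set X), 𝒱.Finite ∧ Ω ⊆ ⋃₀ 𝒱 ∧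
      ∀ V ∈ 𝒱, IsConnected V ∧ V ⊆ Ω ∧ ∀ u ∈ V, ∀ v ∈ V, dist u v < ε := by
  obtain ⟨M, hM, hbetween⟩ := hΩ.exists_isConnected_between
  have hs : 0 < ε / 2 / M := by positivity
  have hMs : M * (ε / 2 / M) = ε / 2 := by field_simp
  obtain ⟨t, htΩ, htfin, ht⟩ := finite_approx_of_totallyBounded htb _ hs
  choose! V hV hVball hVsub using fun x hx => hbetween x (subset_closure (htΩ hx)) _ hs
  simp only [hMs] at hVsub
  refine ⟨V '' t, htfin.image V, fun z hz => ?_, ?_⟩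
  · obtain ⟨x, hx, hzx⟩ := mem_iUnion₂.1 (ht hz)
    exact ⟨V x, mem_image_of_mem V hx, hVball x hx ⟨hzx, hz⟩⟩
  · rintro _ ⟨x, hx, rfl⟩
    refine ⟨hV x hx, (hVsub x hx).trans inter_subset_right, fun u hu v hv => ?_⟩
    linarith [mem_ball.1 (hVsub x hx hu).1, mem_ball.1 (hVsub x hx hv).1,
      dist_triangle_right u v x]

theorem exists_isConnectedNhdSeq (hΩ : BoundedTurning Ω) {x : X} (hx : x ∈ closure Ω) {U : Set X}
    (hU : U ∈ 𝓝[Ω] x) : ∃ V, IsConnectedNhdSeq Ω x V ∧ V 0 ⊆ U := by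
  obtain ⟨M, hM, hbetween⟩ := hΩ.exists_isConnected_between
  obtain ⟨ε, hε, hεU⟩ := Metric.mem_nhdsWithin_iff.1 hU
  let s : ℕ → ℝ := fun k => ε / M * (1 / (2 * M)) ^ k
  have hs : ∀ k, 0 < s k := fun k => by positivity
  have hs_succ : ∀ k, M * s (k + 1) = s k / 2 := fun k => by
    simp only [s, pow_succ]; field_simp
  have hs_lim : Tendsto (fun k => M * s k) atTop (𝓝 0) := by
    have hratio : 1 / (2 * M) < 1 := by rw [div_lt_one (by positivity)]; linarith
    simpa only [mul_zero] using ((tendsto_pow_atTop_nhds_zero_of_lt_one (by positivity)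
      hratio).const_mul (ε / M)).const_mul M
  choose V hV hVball hVsub using fun k => hbetween x hx (s k) (hs k)
  have hthick : ∀ k, thickening (s k / 2) (V (k + 1)) ∩ Ω ⊆ V k := by
    rintro k z ⟨hz, hzΩ⟩
    obtain ⟨v, hv, hzv⟩ := mem_thickening_iff.1 hz
    have hvx := mem_ball.1 (hVsub (k + 1) hv).1
    rw [hs_succ] at hvx
    exact hVball k ⟨mem_ball.2 (by linarith [dist_triangle z v x]), hzΩ⟩
  have hanti : Antitone V := antitone_nat_of_succ_le fun k z hz =>
    hthick k ⟨self_subset_thickening (half_pos (hs k)) _ hz, (hVsub _ hz).2⟩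
  have hbasis : (𝓝[Ω] x).HasBasis (fun _ => True) V := by
    refine ⟨fun T => ⟨fun hT => ?_, fun ⟨k, _, hk⟩ => mem_of_superset ?_ hk⟩⟩
    · obtain ⟨η, hη, hηT⟩ := Metric.mem_nhdsWithin_iff.1 hT
      obtain ⟨k, hk⟩ := (hs_lim.eventually (gt_mem_nhds hη)).exists
      exact ⟨k, trivial, (hVsub k).trans
        ((inter_subset_inter_left Ω (ball_subset_ball hk.le)).trans hηT)⟩
    · exact Metric.mem_nhdsWithin_iff.2 ⟨s k, hs k, hVball k⟩
  refine ⟨V, ⟨⟨hbasis, hanti⟩, hV, fun k => (hVsub k).trans inter_subset_right,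
    fun k => ⟨s k / 2, half_pos (hs k), hthick k⟩⟩, ?_⟩
  have hs_zero : M * s 0 = ε := by simp only [s, pow_zero]; field_simp
  exact (hs_zero ▸ hVsub 0).trans hεU

end BoundedTurning

/-! ### Impressions and division of chains -/

section Chains

variable {X : Type*} [MetricSpace X] {Ω : Set X} {E G : ℕ → Set X}

theorem impression_subset_of_chainDivides (h : ChainDivides E G) :
    impression E ⊆ impression G := fun _ hy => mem_iInter.2 fun k =>
  let ⟨l, hl⟩ := h k
  closure_mono hl (mem_iInter.1 hy l)

theorem ChainEquiv.impression_eq (h : ChainEquiv E G) : impression E = impression G :=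
  (impression_subset_of_chainDivides h.1).antisymm (impression_subset_of_chainDivides h.2)

theorem impression_eq_singleton {l : Filter X} [l.NeBot] {y : X} (hG : l.HasAntitoneBasis G)
    (hl : l ≤ 𝓝 y) : impression G = {y} := by
  have hmem : ∀ z, z ∈ impression G ↔ ClusterPt z l := fun z => by
    simp only [impression, mem_iInter, hG.toHasBasis.clusterPt_iff_forall_mem_closure, true_imp_iff]
  ext z
  rw [hmem, mem_singleton_iff]
  constructor
  · exact fun hz => eq_of_nhds_neBot (hz.mono hl).neBot
  · rintro rfl
    exact ClusterPt.of_le_nhds hl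

theorem IsChainIn.isConnected (hE : IsChainIn Ω E) (k : ℕ) : IsConnected (E k) :=
  let ⟨_, hconn, _⟩ := hE.1 k
  hconn

theorem IsChainIn.subset (hE : IsChainIn Ω E) (k : ℕ) : E k ⊆ Ω :=
  let ⟨_, _, hsub, _⟩ := hE.1 k
  hsub

theorem IsChainIn.impression_subset (hE : IsChainIn Ω E) : impression E ⊆ frontier Ω :=
  hE.2.2.2

theorem IsChainIn.chainDivides_of_tendsto_ediam (hE : IsChainIn Ω E)
    (hG : ∀ n, IsConnected (G n)) (hGΩ : ∀ n, G n ⊆ Ω) (hmeet : ∀ n k, (G n ∩ E k).Nonempty)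
    (hdiam : Tendsto (fun n => ediam (G n)) atTop (𝓝 0)) : ChainDivides G E := by
  obtain ⟨-, hE_succ, hE_dist, -⟩ := hE
  intro k
  obtain ⟨n, hn⟩ := (hdiam.eventually (gt_mem_nhds (hE_dist k))).exists
  refine ⟨n, by_contra fun hnot => hn.not_ge ?_⟩
  have hfrontier : ∀ j, ¬ G n ⊆ E j → (G n ∩ (Ω ∩ frontier (E j))).Nonempty := fun j hj =>
    (inter_frontier_nonempty_of_isPreconnected (hG n).isPreconnected (hmeet n j) hj).mono
      fun z hz => ⟨hz.1, hGΩ n hz.1, hz.2⟩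
  exact mazDist_le_ediam (hGΩ n) (hG n)
    (hfrontier (k + 1) fun h => hnot (h.trans (hE_succ k))) (hfrontier k hnot)

end Chains

namespace IsConnectedNhdSeq

variable {X Y : Type*} [MetricSpace X] [MetricSpace Y] {Ω : Set X} {x : X} {V : ℕ → Set X}
  {f : X → Y} {y : Y}

theorem impression_image (hV : IsConnectedNhdSeq Ω x V) (hf : Tendsto f (𝓝[Ω] x) (𝓝 y)) :
    impression (fun k => f '' V k) = {y} := by
  have : (𝓝[Ω] x).NeBot :=
    hV.hasAntitoneBasis.toHasBasis.neBot_iff.2 fun _ => (hV.isConnected _).nonempty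
  exact impression_eq_singleton (hV.hasAntitoneBasis.map f) hf

theorem tendsto_ediam_image (hV : IsConnectedNhdSeq Ω x V) (hf : Tendsto f (𝓝[Ω] x) (𝓝 y)) :
    Tendsto (fun k => ediam (f '' V k)) atTop (𝓝 0) :=
  (tendsto_ediam_smallSets_nhds y).comp
    ((hV.hasAntitoneBasis.map f).tendsto_smallSets.mono_right (monotone_smallSets hf))

theorem inter_nonempty (hV : IsConnectedNhdSeq Ω x V) {S : Set X} (hS : S ⊆ Ω)
    (hx : x ∈ closure S) (k : ℕ) : (V k ∩ S).Nonempty := by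
  have := mem_closure_iff_nhdsWithin_neBot.1 hx
  exact nonempty_of_mem (f := 𝓝[S] x) (inter_mem
    (nhdsWithin_mono x hS (hV.hasAntitoneBasis.mem k)) self_mem_nhdsWithin)

end IsConnectedNhdSeq

/-! ### Homeomorphisms reflecting contact of connected sets -/

namespace IsHomeoBetween

variable {X Y : Type*} [MetricSpace X] [MetricSpace Y] {Ω : Set X} {Ω' : Set Y} {f : X → Y}
  {g : Y → X}

theorem symm (hf : IsHomeoBetween f g Ω Ω') : IsHomeoBetween g f Ω' Ω :=
  let ⟨hfcont, hgcont, hfΩ, hgΩ', hgf, hfg⟩ := hf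
  ⟨hgcont, hfcont, hgΩ', hfΩ, hfg, hgf⟩

theorem bijOn (hf : IsHomeoBetween f g Ω Ω') : BijOn f Ω Ω' :=
  let ⟨_, _, hfΩ, hgΩ', hgf, hfg⟩ := hf
  InvOn.bijOn ⟨hgf, hfg⟩ hfΩ hgΩ'

theorem image_subset (hf : IsHomeoBetween f g Ω Ω') {A : Set X} (hA : A ⊆ Ω) : f '' A ⊆ Ω' :=
  (hf.bijOn.mapsTo.mono_left hA).image_subset

theorem inv_image_image (hf : IsHomeoBetween f g Ω Ω') {A : Set X} (hA : A ⊆ Ω) :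
    g '' (f '' A) = A :=
  let ⟨_, _, _, _, hgf, _⟩ := hf
  LeftInvOn.image_image' hgf hA

theorem inv_mem_closure (hf : IsHomeoBetween f g Ω Ω') {S : Set X} (hS : S ⊆ Ω) {y : Y}
    (hy : y ∈ Ω') (hyS : y ∈ closure (f '' S)) : g y ∈ closure S := by
  have hcont : ContinuousWithinAt g (f '' S) y := (hf.symm.1 y hy).mono (hf.image_subset hS)
  exact hf.inv_image_image hS ▸ hcont.mem_closure_image hyS

theorem mem_impression_of_tendsto (hf : IsHomeoBetween f g Ω Ω') {E : ℕ → Set Y}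
    (hE : ∀ k, E k ⊆ Ω') {x : X} (hx : ∀ k, x ∈ closure (g '' E k)) {y : Y}
    (hy : Tendsto f (𝓝[Ω] x) (𝓝 y)) : y ∈ impression E := mem_iInter.2 fun k => by
  have := mem_closure_iff_nhdsWithin_neBot.1 (hx k)
  refine mem_closure_of_tendsto
    (hy.mono_left (nhdsWithin_mono x (hf.symm.image_subset (hE k)))) ?_
  filter_upwards [self_mem_nhdsWithin] with z hz
  exact hf.symm.inv_image_image (hE k) ▸ mem_image_of_mem f hz

theorem exists_forall_mem_closure_image_inv (hf : IsHomeoBetween f g Ω Ω')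
    (hΩ : IsCompact (closure Ω)) {E : ℕ → Set Y} (hE : IsChainIn Ω' E) :
    ∃ x ∈ closure Ω, ∀ k, x ∈ closure (g '' E k) := by
  have hgE : ∀ k, closure (g '' E k) ⊆ closure Ω := fun k =>
    closure_mono (hf.symm.image_subset (hE.subset k))
  obtain ⟨x, hx⟩ := IsCompact.nonempty_iInter_of_sequence_nonempty_isCompact_isClosed
    (fun k => closure (g '' E k)) (fun k => closure_mono (image_mono (hE.2.1 k)))
    (fun k => ((hE.isConnected k).nonempty.image g).closure)
    (hΩ.of_isClosed_subset isClosed_closure (hgE 0)) fun _ => isClosed_closure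
  exact ⟨x, hgE 0 (mem_iInter.1 hx 0), mem_iInter.1 hx⟩

end IsHomeoBetween

/-- `f` reflects vanishing of the inner diameter distance between connected proper subsets of `Ω`.
This is the half of the condition defining `ClassF` that controls chains in `Ω'`. -/
def ReflectsInnerDiamZero {X Y : Type*} [MetricSpace X] [MetricSpace Y] (Ω : Set X) (Ω' : Set Y)
    (f : X → Y) : Prop :=
  ∀ V W : Set X, V ⊆ Ω → V ≠ Ω → IsConnected V → W ⊆ Ω → W ≠ Ω → IsConnected W →
    innerDiamDist Ω' (f '' V) (f '' W) = 0 → innerDiamDist Ω V W = 0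

theorem ClassF.reflectsInnerDiamZero {X Y : Type*} [MetricSpace X] [MetricSpace Y] {Ω : Set X}
    {Ω' : Set Y} {f : X → Y} {g : Y → X} (hf : ClassF Ω Ω' f g) : ReflectsInnerDiamZero Ω Ω' f :=
  fun V W hVΩ hVne hV hWΩ hWne hW => (hf.2 V W hVΩ hVne hV hWΩ hWne hW).2

namespace ReflectsInnerDiamZero

variable {X Y : Type*} [MetricSpace X] [MetricSpace Y] {Ω : Set X} {Ω' : Set Y} {f : X → Y}
  {g : Y → X}

theorem innerDiamDist_image_pos (hrefl : ReflectsInnerDiamZero Ω Ω' f) {V W : Set X}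
    (hVΩ : V ⊆ Ω) (hV : IsConnected V) (hWΩ : W ⊆ Ω) (hW : IsConnected W) {δ : ℝ} (hδ : 0 < δ)
    (hVW : ∀ v ∈ V, ∀ w ∈ W, δ ≤ dist v w) : 0 < innerDiamDist Ω' (f '' V) (f '' W) := by
  have hdisj : Disjoint V W := Set.disjoint_left.2 fun v hv hw =>
    hδ.not_ge ((hVW v hv v hw).trans_eq (dist_self v))
  obtain ⟨v, hv⟩ := hV.nonempty
  obtain ⟨w, hw⟩ := hW.nonempty
  have hVne : V ≠ Ω := fun h => Set.disjoint_left.1 hdisj (h ▸ hWΩ hw) hw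
  have hWne : W ≠ Ω := fun h => Set.disjoint_left.1 hdisj hv (h ▸ hVΩ hv)
  refine pos_iff_ne_zero.2 fun h => ?_
  have hpos : 0 < innerDiamDist Ω V W :=
    (ENNReal.ofReal_pos.2 hδ).trans_le (ofReal_le_innerDiamDist hVW)
  exact hpos.ne' (hrefl V W hVΩ hVne hV hWΩ hWne hW h)

variable (hrefl : ReflectsInnerDiamZero Ω Ω' f) (hf : IsHomeoBetween f g Ω Ω')
  (hbt : BoundedTurning Ω) (htb : TotallyBounded Ω) (hY : QuasiconvexSpace Y) (hΩ' : IsOpen Ω')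
include hrefl hf hbt htb hY hΩ'

theorem mazDist_pos {A B : Set Y} {δ : ℝ} (hδ : 0 < δ)
    (hAB : ∀ a ∈ A, ∀ b ∈ B, δ ≤ dist (g a) (g b)) : 0 < mazDist Ω' A B := by
  obtain ⟨-, -, -, hgΩ', -, hfg⟩ := hf
  obtain ⟨𝒱, hfin, hcover, h𝒱⟩ :=
    hbt.exists_finite_isConnected_cover htb (show 0 < δ / 3 by positivity)
  obtain ⟨η, hη, hη_le⟩ := exists_pos_forall_le_of_finite (hfin.prod hfin)
    fun P => innerDiamDist Ω' (f '' P.1) (f '' P.2)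
  refine hη.trans_le (le_iInf₂ fun K ⟨hKΩ', hK, ⟨a, haK, haA⟩, ⟨b, hbK, hbB⟩⟩ => ?_)
  obtain ⟨V, hV𝒱, haV⟩ := hcover (hgΩ' (hKΩ' haK))
  obtain ⟨W, hW𝒱, hbW⟩ := hcover (hgΩ' (hKΩ' hbK))
  obtain ⟨hV, hVΩ, hVsmall⟩ := h𝒱 V hV𝒱
  obtain ⟨hW, hWΩ, hWsmall⟩ := h𝒱 W hW𝒱
  have hVW : ∀ v ∈ V, ∀ w ∈ W, δ / 3 ≤ dist v w := fun v hv w hw => by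
    linarith [hAB a haA b hbB, hVsmall _ haV v hv, hWsmall w hw _ hbW,
      dist_triangle4 (g a) v w (g b)]
  calc η ≤ innerDiamDist Ω' (f '' V) (f '' W) := hη_le (V, W) ⟨hV𝒱, hW𝒱⟩
        (hrefl.innerDiamDist_image_pos hVΩ hV hWΩ hW (by positivity) hVW)
    _ ≤ mazDist Ω' (f '' V) (f '' W) := hY.innerDiamDist_le_mazDist hΩ' _ _
    _ ≤ ediam K := mazDist_le_ediam hKΩ' hK ⟨a, haK, g a, haV, hfg a (hKΩ' haK)⟩
        ⟨b, hbK, g b, hbW, hfg b (hKΩ' hbK)⟩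

theorem mazDist_frontier_image_pos {V W : Set X} (hWΩ : W ⊆ Ω) {δ : ℝ} (hδ : 0 < δ)
    (hVW : thickening δ W ∩ Ω ⊆ V) :
    0 < mazDist Ω' (Ω' ∩ frontier (f '' W)) (Ω' ∩ frontier (f '' V)) := by
  refine hrefl.mazDist_pos hf hbt htb hY hΩ' hδ fun a ⟨ha, haW⟩ b ⟨hb, hbV⟩ => ?_
  have hga : g a ∈ closure W := hf.inv_mem_closure hWΩ ha haW.1
  have hgb : g b ∈ closure (Ω \ V) := by
    refine hf.inv_mem_closure sdiff_subset hb ?_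
    have hcompl : Ω' ∩ (f '' V)ᶜ ⊆ f '' (Ω \ V) := by
      rintro z ⟨hz, hzV⟩
      obtain ⟨w, hw, rfl⟩ := hf.bijOn.surjOn hz
      exact ⟨w, ⟨hw, fun hwV => hzV ⟨w, hwV, rfl⟩⟩, rfl⟩
    exact closure_mono hcompl (hΩ'.inter_closure ⟨hb, (closure_compl (s := f '' V)) ▸ hbV.2⟩)
  have hfar : closure (Ω \ V) ⊆ (thickening δ W)ᶜ :=
    closure_minimal (fun z hz hzW => hz.2 (hVW ⟨hzW, hz.1⟩)) isOpen_thickening.isClosed_compl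
  by_contra! hlt
  refine hfar hgb ?_
  rw [← thickening_closure]
  exact mem_thickening_iff.2 ⟨g a, hga, by rwa [dist_comm]⟩

theorem isChainIn_image {x : X} {V : ℕ → Set X} (hV : IsConnectedNhdSeq Ω x V) {y : Y}
    (hy : Tendsto f (𝓝[Ω] x) (𝓝 y)) (hyΩ' : y ∈ frontier Ω') (hbdd : IsBounded (f '' V 0))
    (hne : f '' V 0 ≠ Ω') : IsChainIn Ω' (fun k => f '' V k) := by
  have himp : impression (fun k => f '' V k) = {y} := hV.impression_image hy
  have hanti : Antitone fun k => f '' V k := fun _ _ h =>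
    image_mono (hV.hasAntitoneBasis.antitone h)
  have hsub : ∀ k, f '' V k ⊆ Ω' := fun k => hf.image_subset (hV.subset k)
  refine ⟨fun k => ⟨hbdd.subset (hanti k.zero_le), ?_, hsub k, fun h => hne ?_, y, ?_, hyΩ'⟩,
    fun k => hanti k.le_succ, fun k => ?_, himp.trans_subset (singleton_subset_iff.2 hyΩ')⟩
  · exact (hV.isConnected k).image f (hf.1.mono (hV.subset k))
  · exact (hsub 0).antisymm (h.symm.trans_subset (hanti k.zero_le))
  · exact mem_iInter.1 (himp.symm.subset rfl) k
  · obtain ⟨δ, hδ, hthick⟩ := hV.exists_thickening_subset k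
    exact hrefl.mazDist_frontier_image_pos hf hbt htb hY hΩ' (hV.subset _) hδ hthick

theorem exists_isChainIn_chainDivides {E : ℕ → Set Y} (hE : IsChainIn Ω' E) {x : X}
    (hx : ∀ k, x ∈ closure (g '' E k)) {y : Y} (hy : Tendsto f (𝓝[Ω] x) (𝓝 y)) :
    ∃ G, IsChainIn Ω' G ∧ ChainDivides G E ∧ impression G = {y} := by
  have hgE : ∀ k, g '' E k ⊆ Ω := fun k => hf.symm.image_subset (hE.subset k)
  have hyΩ' : y ∈ frontier Ω' :=
    hE.impression_subset (hf.mem_impression_of_tendsto hE.subset hx hy)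
  obtain ⟨q, hq⟩ : Ω'.Nonempty := (hE.isConnected 0).nonempty.mono (hE.subset 0)
  have hyq : y ≠ q := fun h => (h ▸ hyΩ').2 (hΩ'.interior_eq.symm ▸ hq)
  have hU : f ⁻¹' ball y (dist q y) ∈ 𝓝[Ω] x := hy (ball_mem_nhds y (dist_pos.2 hyq.symm))
  obtain ⟨V, hV, hVU⟩ := hbt.exists_isConnectedNhdSeq (closure_mono (hgE 0) (hx 0)) hU
  have hball : f '' V 0 ⊆ ball y (dist q y) := image_subset_iff.2 hVU
  have hne : f '' V 0 ≠ Ω' := fun h => (mem_ball.1 (hball (h ▸ hq))).false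
  have hchain : IsChainIn Ω' fun k => f '' V k :=
    hrefl.isChainIn_image hf hbt htb hY hΩ' hV hy hyΩ' (isBounded_ball.subset hball) hne
  have hmeet : ∀ n k, (f '' V n ∩ E k).Nonempty := fun n k => by
    rw [← hf.symm.inv_image_image (hE.subset k)]
    exact ((hV.inter_nonempty (hgE k) (hx k) n).image f).mono (image_inter_subset f _ _)
  exact ⟨_, hchain, hE.chainDivides_of_tendsto_ediam hchain.isConnected hchain.subset hmeet
    (hV.tendsto_ediam_image hy), hV.impression_image hy⟩

end ReflectsInnerDiamZero

theorem statement_6_general {X Y : Type*} [MetricSpace X] [MetricSpace Y]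
    (hY : QuasiconvexSpace Y) {Ω : Set X} (hΩ : IsCompact (closure Ω)) (hΩbt : BoundedTurning Ω)
    {Ω' : Set Y} (hΩ' : IsOpen Ω') {f : X → Y} {g : Y → X} (hf : IsHomeoBetween f g Ω Ω')
    (hrefl : ReflectsInnerDiamZero Ω Ω' f)
    (hlim : ∀ x ∈ closure Ω, ∃ y, Tendsto f (𝓝[Ω] x) (𝓝 y)) {E : ℕ → Set Y}
    (hE : IsPrimeChain Ω' E) : ∃ y, impression E = {y} := by
  obtain ⟨hchain, hprime⟩ := hE
  obtain ⟨x, hxΩ, hx⟩ := hf.exists_forall_mem_closure_image_inv hΩ hchain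
  obtain ⟨y, hy⟩ := hlim x hxΩ
  obtain ⟨G, hG, hGE, hGy⟩ := hrefl.exists_isChainIn_chainDivides hf hΩbt
    (hΩ.totallyBounded.subset subset_closure) hY hΩ' hchain hx hy
  have hEG : ChainEquiv E G := ⟨hprime G hG hGE, hGE⟩
  exact ⟨y, hEG.impression_eq.trans hGy⟩

/-- if `f ∈ F(Ω, Ω')` with `Ω` of bounded turning has a continuous extension
`F : closure Ω → Ω''`, then every prime end of `Ω'` with impression contained in
`⋃_{x ∈ ∂Ω} C(f,x)` is a singleton prime end. -/
theorem statement_6 {X Y : Type*} [MetricSpace X] [MetricSpace Y]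
    (hX : AssumptionsA X) (hY : AssumptionsA Y)
    (Ω : Set X) (hΩdom : IsDomainIn Ω) (hΩbdd : Bornology.IsBounded Ω)
    (hΩne : Ω ≠ Set.univ) (hΩbt : BoundedTurning Ω)
    (Ω' : Set Y) (hΩ'dom : IsDomainIn Ω') (hΩ'bdd : Bornology.IsBounded Ω')
    (hΩ'ne : Ω' ≠ Set.univ)
    (f : X → Y) (g : Y → X) (hf : ClassF Ω Ω' f g)
    (F : X → Y) (hFcont : ContinuousOn F (closure Ω)) (hFeq : Set.EqOn F f Ω)
    (hFmaps : Set.MapsTo F (closure Ω) (Ω' ∪ ⋃ x ∈ frontier Ω, clusterSetOn f Ω x)) :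
    ∀ E : ℕ → Set Y, IsPrimeChain Ω' E →
      impression E ⊆ ⋃ x ∈ frontier Ω, clusterSetOn f Ω x →
      ∃ y : Y, impression E = {y} := by
  intro E hE _
  have := hX.1
  refine statement_6_general hY.2.2 (hX.2.1.isCompact_closure hΩbdd) hΩbt hΩ'dom.1 hf.1
    hf.reflectsInnerDiamZero (fun x hx => ⟨F x, ?_⟩) hE
  exact ((hFcont x hx).mono subset_closure).tendsto.congr' hFeq.eventuallyEq_nhdsWithin

end
end

section
/- Let X and Y be metric spaces satisfying assumptions (A), and let Ω ⊊ X and Ω' ⊊ Y be bounded domains, each of which is linearly connected (i.e., there is L' ≥ 1 such that any two points of the domain lie in a continuum contained in the domain of diameter at most L' times their distance). If f : Ω → Ω' is a surjective L-bi-Lipschitz homeomorphism, i.e. (1/L)·d_X(x,y) ≤ d_Y(f(x),f(y)) ≤ L·d_X(x,y) for all x,y ∈ Ω, then f belongs to the class F(Ω, Ω'). -/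
open Set Metric Filter Bornology
open scoped ENNReal Topology

noncomputable section

/-! A `K`-Lipschitz map sends a rectifiable curve to a rectifiable curve and multiplies its diameter
by at most `K`, so it can only send sets at inner diameter distance zero to sets at inner diameter
distance zero. For a bi-Lipschitz map this applies to the inverse as well. -/

theorem ediam_image_le_of_lipschitzOnWith {X Y : Type*} [PseudoEMetricSpace X]
    [PseudoEMetricSpace Y] {f : X → Y} {K : NNReal} {s : Set X} (hf : LipschitzOnWith K f s) :
    ediam (f '' s) ≤ K * ediam s := by
  simpa only [NNReal.coe_one, ENNReal.rpow_one] using hf.holderOnWith.ediam_image_le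

theorem antilipschitzWith_domRestrict_of_one_div_mul_dist_le {X Y : Type*}
    [PseudoMetricSpace X] [PseudoMetricSpace Y] {f : X → Y} {s : Set X} {L : ℝ} (hL : 0 < L)
    (h : ∀ x ∈ s, ∀ y ∈ s, 1 / L * dist x y ≤ dist (f x) (f y)) :
    AntilipschitzWith L.toNNReal (s.domRestrict f) := by
  refine AntilipschitzWith.of_le_mul_dist fun x y => ?_
  have hxy := h x x.2 y y.2
  rwa [one_div, inv_mul_le_iff₀ hL, ← Real.coe_toNNReal L hL.le] at hxy

theorem exists_lipschitzOnWith_invOn {X Y : Type*} [EMetricSpace X] [PseudoEMetricSpace Y]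
    [Nonempty X] {f : X → Y} {K : NNReal} {s : Set X} {t : Set Y}
    (hf : AntilipschitzWith K (s.domRestrict f)) (hmaps : MapsTo f s t) (hsurj : SurjOn f s t) :
    ∃ g : Y → X, LipschitzOnWith K g t ∧ MapsTo g t s ∧ InvOn g f s t := by
  have hbij : BijOn f s t := ⟨hmaps, injOn_iff_injective.2 hf.injective, hsurj⟩
  have hgmaps := hsurj.mapsTo_invFunOn
  have hinv := hbij.invOn_invFunOn
  exact ⟨_, lipschitzOnWith_iff_restrict.2 (hf.to_rightInvOn' hgmaps hinv.2), hgmaps, hinv⟩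

/-- `γ`, parametrised by `[0, 1]`, is a rectifiable curve in `Ω` from `E` to `F`. These are the
competitors in the infimum defining `innerDiamDist Ω E F`. -/
def IsRectifiableCurveIn {X : Type*} [MetricSpace X] (Ω E F : Set X) (γ : ℝ → X) : Prop :=
  ContinuousOn γ (Icc 0 1) ∧ γ '' Icc 0 1 ⊆ Ω ∧ eVariationOn γ (Icc 0 1) < ⊤ ∧ γ 0 ∈ E ∧ γ 1 ∈ F

section LipschitzMaps

variable {X Y : Type*} [MetricSpace X] [MetricSpace Y] {Ω E F : Set X} {Ω' : Set Y}
  {f : X → Y} {g : Y → X} {K K' : NNReal}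

theorem IsRectifiableCurveIn.lipschitzOnWith_comp {γ : ℝ → X}
    (hγ : IsRectifiableCurveIn Ω E F γ) (hf : LipschitzOnWith K f Ω) (hmaps : MapsTo f Ω Ω') :
    IsRectifiableCurveIn Ω' (f '' E) (f '' F) (f ∘ γ) := by
  obtain ⟨hcont, hsub, hfin, h0, h1⟩ := hγ
  have hγmaps : MapsTo γ (Icc 0 1) Ω := mapsTo_iff_image_subset.2 hsub
  refine ⟨hf.continuousOn.comp hcont hγmaps, (hmaps.comp hγmaps).image_subset, ?_,
    mem_image_of_mem f h0, mem_image_of_mem f h1⟩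
  calc eVariationOn (f ∘ γ) (Icc 0 1)
      ≤ K * eVariationOn γ (Icc 0 1) := hf.comp_eVariationOn_le hγmaps
    _ < ⊤ := ENNReal.mul_lt_top ENNReal.coe_lt_top hfin

theorem innerDiamDist_le_ediam {γ : ℝ → X} (hγ : IsRectifiableCurveIn Ω E F γ) :
    innerDiamDist Ω E F ≤ ediam (γ '' Icc 0 1) :=
  iInf₂_le γ hγ

-- The multiplicative form can fail for `K = 0` when no curve joins `E` to `F`, because `0 * ⊤ = 0`.
theorem innerDiamDist_image_div_le (hf : LipschitzOnWith K f Ω) (hmaps : MapsTo f Ω Ω') :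
    innerDiamDist Ω' (f '' E) (f '' F) / K ≤ innerDiamDist Ω E F := by
  refine le_iInf₂ fun γ (hγ : IsRectifiableCurveIn Ω E F γ) => ENNReal.div_le_of_le_mul' ?_
  calc innerDiamDist Ω' (f '' E) (f '' F)
      ≤ ediam ((f ∘ γ) '' Icc 0 1) :=
        innerDiamDist_le_ediam (hγ.lipschitzOnWith_comp hf hmaps)
    _ = ediam (f '' (γ '' Icc 0 1)) := by rw [image_comp]
    _ ≤ K * ediam (γ '' Icc 0 1) := ediam_image_le_of_lipschitzOnWith (hf.mono hγ.2.1)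

theorem innerDiamDist_image_eq_zero (hf : LipschitzOnWith K f Ω) (hmaps : MapsTo f Ω Ω')
    (h : innerDiamDist Ω E F = 0) : innerDiamDist Ω' (f '' E) (f '' F) = 0 := by
  have hdiv : innerDiamDist Ω' (f '' E) (f '' F) / K = 0 :=
    le_zero_iff.1 (h ▸ innerDiamDist_image_div_le hf hmaps)
  exact (ENNReal.div_eq_zero_iff.1 hdiv).resolve_right ENNReal.coe_ne_top

theorem innerDiamDist_image_eq_zero_iff (hf : LipschitzOnWith K f Ω)
    (hg : LipschitzOnWith K' g Ω') (hfmaps : MapsTo f Ω Ω') (hgmaps : MapsTo g Ω' Ω)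
    (hinv : LeftInvOn g f Ω) (hE : E ⊆ Ω) (hF : F ⊆ Ω) :
    innerDiamDist Ω' (f '' E) (f '' F) = 0 ↔ innerDiamDist Ω E F = 0 := by
  refine ⟨fun h => ?_, innerDiamDist_image_eq_zero hf hfmaps⟩
  simpa only [hinv.image_image' hE, hinv.image_image' hF] using
    innerDiamDist_image_eq_zero hg hgmaps h

theorem statement_12_general (hΩ : Ω.Nonempty) {L : ℝ} (hL : 0 < L) (hmaps : MapsTo f Ω Ω')
    (hsurj : SurjOn f Ω Ω')
    (hbilip : ∀ x ∈ Ω, ∀ y ∈ Ω,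
      1 / L * dist x y ≤ dist (f x) (f y) ∧ dist (f x) (f y) ≤ L * dist x y) :
    ∃ g : Y → X, IsHomeoBetween f g Ω Ω' ∧ ∀ E ⊆ Ω, ∀ F ⊆ Ω,
      (innerDiamDist Ω E F = 0 ↔ innerDiamDist Ω' (f '' E) (f '' F) = 0) := by
  have : Nonempty X := hΩ.to_type
  have hf : LipschitzOnWith L.toNNReal f Ω := .of_dist_le' fun x hx y hy => (hbilip x hx y hy).2
  have hf' : AntilipschitzWith L.toNNReal (Ω.domRestrict f) :=
    antilipschitzWith_domRestrict_of_one_div_mul_dist_le hL fun x hx y hy => (hbilip x hx y hy).1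
  obtain ⟨g, hg, hgmaps, hinv⟩ := exists_lipschitzOnWith_invOn hf' hmaps hsurj
  exact ⟨g, ⟨hf.continuousOn, hg.continuousOn, hmaps, hgmaps, hinv.1, hinv.2⟩, fun E hE F hF =>
    (innerDiamDist_image_eq_zero_iff hf hg hmaps hgmaps hinv.1 hE hF).symm⟩

end LipschitzMaps

/-- a surjective `L`-bi-Lipschitz homeomorphism between bounded linearly
connected domains belongs to the class `F(Ω, Ω')`. -/
theorem statement_12 {X Y : Type*} [MetricSpace X] [MetricSpace Y]
    (hX : AssumptionsA X) (hY : AssumptionsA Y)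
    (Ω : Set X) (hΩdom : IsDomainIn Ω) (hΩbdd : Bornology.IsBounded Ω)
    (hΩne : Ω ≠ Set.univ) (hΩlin : BoundedTurning Ω)
    (Ω' : Set Y) (hΩ'dom : IsDomainIn Ω') (hΩ'bdd : Bornology.IsBounded Ω')
    (hΩ'ne : Ω' ≠ Set.univ) (hΩ'lin : BoundedTurning Ω')
    (f : X → Y) (L : ℝ) (hL : 1 ≤ L)
    (hmaps : Set.MapsTo f Ω Ω') (hsurj : Set.SurjOn f Ω Ω')
    (hbilip : ∀ x ∈ Ω, ∀ y ∈ Ω,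
      (1 / L) * dist x y ≤ dist (f x) (f y) ∧ dist (f x) (f y) ≤ L * dist x y) :
    ∃ g : Y → X, ClassF Ω Ω' f g := by
  obtain ⟨g, hg, hzero⟩ :=
    statement_12_general hΩdom.2.nonempty (zero_lt_one.trans_le hL) hmaps hsurj hbilip
  exact ⟨g, hg, fun E F hE _ _ hF _ _ => hzero E hE F hF⟩

end
end

section
/- Let X and Y be complete metric spaces with X proper (every closed bounded subset of X is compact), let Ω ⊊ X and D ⊊ Y be bounded domains, and let f : Ω → D be a homeomorphism. If F is an acceptable set in D, then f⁻¹(F) is an acceptable set in Ω. -/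
open Set Metric Filter Bornology
open scoped ENNReal Topology

noncomputable section

theorem closure_subset_interior_of_disjoint_frontier {X : Type*} [TopologicalSpace X]
    {s t : Set X} (hst : s ⊆ t) (h : Disjoint (closure s) (frontier t)) :
    closure s ⊆ interior t :=
  h.subset_left_of_subset_union <|
    (closure_mono hst).trans (closure_eq_interior_union_frontier t).subset

/- If `closure s` missed the frontier of `t`, it would be a compact subset of `t`, so its image
would be both closed and contained in the open set `u`, away from the frontier of `u`. -/
theorem nonempty_closure_inter_frontier_of_image {X Y : Type*} [TopologicalSpace X]
    [TopologicalSpace Y] [T2Space Y] {f : X → Y} {s t : Set X} {u : Set Y}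
    (hst : s ⊆ t) (hs : IsCompact (closure s)) (hf : ContinuousOn f t) (hftu : MapsTo f t u)
    (hu : IsOpen u) (h : (closure (f '' s) ∩ frontier u).Nonempty) :
    (closure s ∩ frontier t).Nonempty := by
  contrapose! h
  have closure_subset : closure s ⊆ t :=
    (closure_subset_interior_of_disjoint_frontier hst (disjoint_iff_inter_eq_empty.2 h)).trans
      interior_subset
  have closure_image_subset : closure (f '' s) ⊆ u := by
    rw [← image_closure_of_isCompact hs (hf.mono closure_subset)]
    exact (hftu.mono_left closure_subset).image_subset
  exact subset_eq_empty (inter_subset_inter_left _ closure_image_subset) hu.inter_frontier_eq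

namespace IsHomeoBetween

variable {X Y : Type*} [MetricSpace X] [MetricSpace Y] {f : X → Y} {g : Y → X}
  {Ω : Set X} {D F : Set Y}

theorem image_symm_subset (hfg : IsHomeoBetween f g Ω D) (hFD : F ⊆ D) : g '' F ⊆ Ω :=
  (hfg.2.2.2.1.mono_left hFD).image_subset

theorem image_image_symm (hfg : IsHomeoBetween f g Ω D) (hFD : F ⊆ D) : f '' (g '' F) = F :=
  LeftInvOn.image_image' hfg.2.2.2.2.2 hFD

theorem image_symm_ne (hfg : IsHomeoBetween f g Ω D) (hFD : F ⊆ D) (hne : F ≠ D) :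
    g '' F ≠ Ω := by
  rintro rfl
  refine hne (hFD.antisymm ?_)
  calc
    D = f '' (g '' D) := (hfg.image_image_symm Subset.rfl).symm
    _ ⊆ f '' (g '' F) := image_mono (hfg.image_symm_subset Subset.rfl)
    _ = F := hfg.image_image_symm hFD

end IsHomeoBetween

theorem statement_17_general {X Y : Type*} [MetricSpace X] [MetricSpace Y]
    {Ω : Set X} {D : Set Y} (hD : IsOpen D) {f : X → Y} {g : Y → X}
    (hfg : IsHomeoBetween f g Ω D) {F : Set Y} (hF : AcceptableIn D F)
    (hgF : IsCompact (closure (g '' F))) :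
    AcceptableIn Ω (g '' F) := by
  obtain ⟨-, hFconn, hFD, hFne, hFfrontier⟩ := hF
  have ⟨hf, hg, hmaps, _⟩ := hfg
  have hgFΩ : g '' F ⊆ Ω := hfg.image_symm_subset hFD
  refine ⟨hgF.isBounded.subset subset_closure, hFconn.image g (hg.mono hFD), hgFΩ,
    hfg.image_symm_ne hFD hFne, ?_⟩
  rw [← hfg.image_image_symm hFD] at hFfrontier
  exact nonempty_closure_inter_frontier_of_image hgFΩ hgF hf hmaps hD hFfrontier

/-- the preimage under a homeomorphism `f : Ω → D` of an acceptable set in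
`D` is an acceptable set in `Ω` (with `X` complete and proper, `Y` complete). -/
theorem statement_17 {X Y : Type*} [MetricSpace X] [MetricSpace Y]
    [CompleteSpace X] [ProperSpace X] [CompleteSpace Y]
    (Ω : Set X) (hΩdom : IsDomainIn Ω) (hΩbdd : Bornology.IsBounded Ω)
    (hΩne : Ω ≠ Set.univ)
    (D : Set Y) (hDdom : IsDomainIn D) (hDbdd : Bornology.IsBounded D)
    (hDne : D ≠ Set.univ)
    (f : X → Y) (g : Y → X) (hfg : IsHomeoBetween f g Ω D)
    (F : Set Y) (hF : AcceptableIn D F) :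
    AcceptableIn Ω (g '' F) :=
  statement_17_general hDdom.1 hfg hF
    (hΩbdd.subset (hfg.image_symm_subset hF.2.2.1)).isCompact_closure

end
end
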